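/- Let d₁, d₂ be positive integers with d₁d₂ ≥ 4, N = d₁d₂, and let U be Haar-distributed on U(N). With ρ₀, ρ₁, ρ₂, ρ₃ the partial traces over the second factor of the projectors onto the first four columns of U, one has E[Tr(ρ₀ρ₁) · Tr(ρ₂ρ₃)] = (d₂²−1)·(d₂²(d₂²−1)d₁⁴ + 2(7−6d₂²)d₁² + 22) / (d₁²d₂²(d₁²d₂²−7)² − 36). -/

import Mathlib

/-!
Write `ρ_{ij}` (`block U i j`) for the partial trace of `|u_i⟩⟨u_j|`, where `u_i` is the `i`-th
column of `U`, so that `ρ_i = ρ_{ii}`. All the moments that occur are expectations of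
`Tr(ρ_{ij} ρ_{kl})` (`T2`), of `Tr(ρ_{ij} ρ_{kl} ρ_{xy})` (`T3`), or of products of two `T2`. They
are tied together by three kinds of linear relations, which avoids Weingarten calculus.

* Haar measure on a compact group is right invariant (`haar_right_invariant`). Translating by
  permutation matrices, a moment depends only on the pattern of its column indices
  (`expect_T2_perm`, `expect_T3_perm`, `expect_T2_mul_T2_perm`).
* Differentiating the right translation by `exp (t K)` at `t = 0` shows that the derivation
  `U ↦ U K` has mean zero, first for skew-adjoint `K` and then, by complex linearity, for every
  `K` (`integral_deriv`). For the elementary matrix `K = E_{qp}` it replaces a ket index `p` by `q`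
  and a bra index `q` by `p` with a minus sign (`dT2_single`), so each monomial gives a relation
  between moments (`expect_dT2`, `expect_dT3`, `expect_dT2_mul_T2`).
* Since `U U* = 1`, a column index shared by a ket and a bra and summed over all columns can be
  contracted (`sum_block_mul_block`), which lowers the degree of the moment.

Eighteen such relations (`expect_four_columns`) form a linear system for eighteen moments,
triangular enough to be solved by hand (`solve_system`). Its pivots are `N`, `N ± 1`, `N ± 2` and
`N ± 3`, nonzero because `N = d₁d₂ ≥ 4`; the six pivots other than `N` multiply to the denominator
`N² (N² - 7)² - 36`.
-/

open Matrix MeasureTheory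

instance matrixMeasurableSpace {m n α : Type*} [MeasurableSpace α] :
    MeasurableSpace (Matrix m n α) :=
  inferInstanceAs (MeasurableSpace (m → n → α))

/-- For a unitary matrix `U` of size `d₁d₂` and a column index `i`, `rho U i` is the
partial trace over the second tensor factor of the rank-one projector onto the `i`-th
column of `U`: `(rho U i) a b = ∑ k, U_{(a,k),i} * conj (U_{(b,k),i})`. -/
noncomputable def rho {d₁ d₂ : ℕ} (U : Matrix.unitaryGroup (Fin (d₁ * d₂)) ℂ)
    (i : Fin (d₁ * d₂)) : Matrix (Fin d₁) (Fin d₁) ℂ :=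
  Matrix.of fun a b => ∑ k : Fin d₂,
    (U : Matrix (Fin (d₁ * d₂)) (Fin (d₁ * d₂)) ℂ) (finProdFinEquiv (a, k)) i *
      (starRingEnd ℂ) ((U : Matrix (Fin (d₁ * d₂)) (Fin (d₁ * d₂)) ℂ) (finProdFinEquiv (b, k)) i)

/-! ### Invariance of Haar measure on `U(n)` -/

section Haar

variable {n : ℕ}

instance matrixBorelSpace {n : ℕ} : BorelSpace (Matrix (Fin n) (Fin n) ℂ) :=
  inferInstanceAs (BorelSpace (Fin n → Fin n → ℂ))

instance matrixSecondCountable {n : ℕ} :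
    SecondCountableTopology (Matrix (Fin n) (Fin n) ℂ) :=
  inferInstanceAs (SecondCountableTopology (Fin n → Fin n → ℂ))

theorem continuous_entry (x i : Fin n) :
    Continuous fun U : unitaryGroup (Fin n) ℂ => (U : Matrix (Fin n) (Fin n) ℂ) x i :=
  continuous_subtype_val.matrix_elem x i

/-- `U(n)` is closed, and bounded because the entries of a unitary matrix have modulus at most
`1`. -/
instance unitaryGroupCompact : CompactSpace (unitaryGroup (Fin n) ℂ) := by
  have hc : IsClosed {A : Matrix (Fin n) (Fin n) ℂ | A ∈ unitaryGroup (Fin n) ℂ} := by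
    have : {A : Matrix (Fin n) (Fin n) ℂ | A ∈ unitaryGroup (Fin n) ℂ}
        = {A | A * star A = 1} := by
      ext A; exact mem_unitaryGroup_iff
    rw [this]
    exact isClosed_eq (by fun_prop) continuous_const
  suffices h : IsCompact {A : Matrix (Fin n) (Fin n) ℂ | A ∈ unitaryGroup (Fin n) ℂ} from
    isCompact_iff_compactSpace.mp h
  have hk : IsCompact (Set.univ.pi fun _ : Fin n => Set.univ.pi fun _ : Fin n =>
      Metric.closedBall (0 : ℂ) 1) :=
    isCompact_univ_pi fun _ => isCompact_univ_pi fun _ => isCompact_closedBall _ _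
  refine IsCompact.of_isClosed_subset hk hc ?_
  intro A hA i _ j _
  simpa using entry_norm_bound_of_unitary hA i j

theorem integrable_of_continuous (μ : Measure (unitaryGroup (Fin n) ℂ)) [μ.IsHaarMeasure]
    {f : unitaryGroup (Fin n) ℂ → ℂ} (hf : Continuous f) :
    Integrable f μ :=
  hf.integrable_of_hasCompactSupport (HasCompactSupport.of_compactSpace f)

variable (μ : Measure (unitaryGroup (Fin n) ℂ)) [μ.IsHaarMeasure] [IsProbabilityMeasure μ]

/-- Haar measure on the compact group `U(n)` is also right invariant, by uniqueness of the
left-invariant probability measure. -/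
theorem haar_right_invariant : μ.IsMulRightInvariant := by
  constructor
  intro g
  have hm : Measurable fun x : unitaryGroup (Fin n) ℂ => x * g :=
    (continuous_mul_const g).measurable
  have : IsProbabilityMeasure (Measure.map (· * g) μ) :=
    Measure.isProbabilityMeasure_map hm.aemeasurable
  exact Measure.isHaarMeasure_eq_of_isProbabilityMeasure _ _

theorem integral_mul_right (f : unitaryGroup (Fin n) ℂ → ℂ) (g : unitaryGroup (Fin n) ℂ) :
    ∫ U, f (U * g) ∂μ = ∫ U, f U ∂μ :=
  have := haar_right_invariant μ
  integral_mul_right_eq_self f g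

section
open scoped Matrix.Norms.Operator

theorem exp_mem_unitary {K : Matrix (Fin n) (Fin n) ℂ} (hK : star K = -K) (t : ℝ) :
    NormedSpace.exp (t • K) ∈ unitaryGroup (Fin n) ℂ := by
  have h : star (NormedSpace.exp (t • K)) = NormedSpace.exp (-(t • K)) := by
    rw [star_eq_conjTranspose, ← Matrix.exp_conjTranspose, ← star_eq_conjTranspose, star_smul, hK]
    simp
  rw [mem_unitaryGroup_iff, h]
  exact (NormedSpace.exp_add_of_commute (Commute.refl (t • K)).neg_right).symm.trans (by simp)

end

/-- The one-parameter subgroup `t ↦ exp (t K)` of `U(n)` generated by a skew-adjoint `K`. -/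
noncomputable def flow (K : Matrix (Fin n) (Fin n) ℂ) (hK : star K = -K) (t : ℝ) :
    unitaryGroup (Fin n) ℂ :=
  ⟨NormedSpace.exp (t • K), by
    exact exp_mem_unitary hK t⟩

theorem flow_zero (K : Matrix (Fin n) (Fin n) ℂ) (hK : star K = -K) : flow K hK 0 = 1 := by
  apply Subtype.ext
  simp [flow]

theorem flow_add (K : Matrix (Fin n) (Fin n) ℂ) (hK : star K = -K) (s t : ℝ) :
    flow K hK (s + t) = flow K hK s * flow K hK t := by
  apply Subtype.ext
  simp only [flow, Submonoid.coe_mul, add_smul]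
  open scoped Matrix.Norms.Operator in
  exact NormedSpace.exp_add_of_commute (((Commute.refl K).smul_left s).smul_right t)

theorem hasDerivAt_flow (K : Matrix (Fin n) (Fin n) ℂ) (hK : star K = -K)
    (U : unitaryGroup (Fin n) ℂ) (x i : Fin n) :
    HasDerivAt (fun t : ℝ => ((U * flow K hK t : unitaryGroup (Fin n) ℂ) :
      Matrix (Fin n) (Fin n) ℂ) x i) (((U : Matrix (Fin n) (Fin n) ℂ) * K) x i) 0 := by
  have h1 : ∀ y, HasDerivAt (fun t : ℝ => (flow K hK t : Matrix (Fin n) (Fin n) ℂ) y i)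
      (K y i) 0 := by
    intro y
    open scoped Matrix.Norms.Operator in
    have h := hasDerivAt_exp_smul_const (𝕂 := ℝ) K 0
    simp only [zero_smul, NormedSpace.exp_zero, one_mul] at h
    have h2 := hasDerivAt_pi.mp (hasDerivAt_pi.mp h y) i
    exact h2
  simp only [Submonoid.coe_mul, Matrix.mul_apply]
  exact HasDerivAt.fun_sum fun y _ => (h1 y).const_mul _

/-- If `D` is the derivative of `f` along the right translations by `exp (t K)`, then `D` has
mean zero: `t ↦ ∫ f (U exp (t K))` is constant by right invariance. -/
theorem integral_deriv_skew (f D : unitaryGroup (Fin n) ℂ → ℂ) (hf : Continuous f)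
    (hD : Continuous D) (K : Matrix (Fin n) (Fin n) ℂ) (hK : star K = -K)
    (hder : ∀ U, HasDerivAt (fun t : ℝ => f (U * flow K hK t)) (D U) 0) :
    ∫ U, D U ∂μ = 0 := by
  -- the flow property moves the derivative at `0` to any time `s`
  have hder' : ∀ U, ∀ s : ℝ,
      HasDerivAt (fun t : ℝ => f (U * flow K hK t)) (D (U * flow K hK s)) s := by
    intro U s
    have h := hder (U * flow K hK s)
    have h2 : HasDerivAt (fun t : ℝ => f (U * flow K hK s * flow K hK t))
      (D (U * flow K hK s)) (s - s) := by simpa using h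
    have h3 := h2.comp_sub_const s s
    refine h3.congr_of_eventuallyEq (Filter.Eventually.of_forall fun t => ?_)
    simp only [mul_assoc, ← flow_add]
    congr 3
    ring
  obtain ⟨C, hC⟩ := isCompact_univ.exists_bound_of_continuousOn (f := D) hD.continuousOn
  have hc : ∀ {g : unitaryGroup (Fin n) ℂ → ℂ} (s : ℝ), Continuous g →
      Continuous fun U => g (U * flow K hK s) := fun s hg =>
    hg.comp (continuous_mul_const _)
  have key := (hasDerivAt_integral_of_dominated_loc_of_deriv_le (μ := μ) (𝕜 := ℝ)
    (F := fun t U => f (U * flow K hK t)) (F' := fun t U => D (U * flow K hK t)) (x₀ := 0)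
    (s := Set.univ) (bound := fun _ => C) Filter.univ_mem
    (Filter.Eventually.of_forall fun t => (hc t hf).aestronglyMeasurable)
    (integrable_of_continuous μ (hc 0 hf)) (hc 0 hD).aestronglyMeasurable
    (Filter.Eventually.of_forall fun U t _ => hC _ (Set.mem_univ _))
    (integrable_const C) (Filter.Eventually.of_forall fun U t _ => hder' U t)).2
  simp only [integral_mul_right μ f, integral_mul_right μ D] at key
  exact key.unique (hasDerivAt_const _ _)

/-- The mean-zero property for a complex-linear family of derivatives, extended from the
skew-adjoint matrices to all of `M_n(ℂ)`, their complexification. -/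
theorem integral_deriv (f : unitaryGroup (Fin n) ℂ → ℂ)
    (D : Matrix (Fin n) (Fin n) ℂ → unitaryGroup (Fin n) ℂ → ℂ) (hf : Continuous f)
    (hD : ∀ K, Continuous (D K))
    (hlin : ∀ (c : ℂ) A B U, D (A + c • B) U = D A U + c * D B U)
    (hder : ∀ K (hK : star K = -K) U,
      HasDerivAt (fun t : ℝ => f (U * flow K hK t)) (D K U) 0)
    (K : Matrix (Fin n) (Fin n) ℂ) : ∫ U, D K U ∂μ = 0 := by
  -- `K = A + i B` with `A = (K - K*) / 2` and `B = -i (K + K*) / 2` skew-adjoint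
  have hA : star ((1 / 2 : ℂ) • (K - star K)) = -((1 / 2 : ℂ) • (K - star K)) := by
    rw [star_smul, star_sub, star_star, ← smul_neg, neg_sub]; simp
  have hB : star ((-Complex.I / 2 : ℂ) • (K + star K)) = -((-Complex.I / 2 : ℂ) • (K + star K)) := by
    rw [star_smul, star_add, star_star, ← neg_smul, add_comm]
    congr 1
    simp [neg_div]
  have hK : K = (1 / 2 : ℂ) • (K - star K) + Complex.I • ((-Complex.I / 2 : ℂ) • (K + star K)) := by
    rw [smul_smul]
    have : Complex.I * (-Complex.I / 2) = 1 / 2 := by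
      linear_combination (-1 / 2 : ℂ) * Complex.I_mul_I
    rw [this, ← smul_add, sub_add_add_cancel, ← two_smul ℂ K, smul_smul]
    norm_num
  have h1 := integral_deriv_skew μ f _ hf (hD _) _ hA (hder _ hA)
  have h2 := integral_deriv_skew μ f _ hf (hD _) _ hB (hder _ hB)
  rw [hK]
  simp only [hlin]
  rw [integral_add (integrable_of_continuous μ (hD _))
    ((integrable_of_continuous μ (hD _)).const_mul _), integral_const_mul, h1, h2]
  simp

end Haar

/-! ### Partial traces of pairs of columns -/

section Blocks

variable {d₁ d₂ : ℕ}

/-- The partial trace over the second tensor factor of `|u_i⟩⟨u_j|`, where `u_i` is the `i`-th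
column of `U`. The diagonal blocks are the matrices `rho U i`. -/
noncomputable def block (U : unitaryGroup (Fin (d₁ * d₂)) ℂ) (i j : Fin (d₁ * d₂)) :
    Matrix (Fin d₁) (Fin d₁) ℂ :=
  Matrix.of fun a b => ∑ k : Fin d₂,
    (U : Matrix (Fin (d₁ * d₂)) (Fin (d₁ * d₂)) ℂ) (finProdFinEquiv (a, k)) i *
      (starRingEnd ℂ) ((U : Matrix (Fin (d₁ * d₂)) (Fin (d₁ * d₂)) ℂ) (finProdFinEquiv (b, k)) j)

theorem block_apply (U : unitaryGroup (Fin (d₁ * d₂)) ℂ) (i j : Fin (d₁ * d₂)) (a b : Fin d₁) :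
    block U i j a b = ∑ k : Fin d₂,
      (U : Matrix (Fin (d₁ * d₂)) (Fin (d₁ * d₂)) ℂ) (finProdFinEquiv (a, k)) i *
      (starRingEnd ℂ) ((U : Matrix (Fin (d₁ * d₂)) (Fin (d₁ * d₂)) ℂ)
        (finProdFinEquiv (b, k)) j) := rfl

theorem rho_eq_block (U : unitaryGroup (Fin (d₁ * d₂)) ℂ) (i : Fin (d₁ * d₂)) :
    rho U i = block U i i := rfl

theorem continuous_block (i j : Fin (d₁ * d₂)) :
    Continuous fun U : unitaryGroup (Fin (d₁ * d₂)) ℂ => block U i j := by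
  refine continuous_matrix fun a b => ?_
  simp only [block_apply]
  exact continuous_finsetSum _ fun k _ =>
    (continuous_entry _ _).mul (Complex.continuous_conj.comp (continuous_entry _ _))

theorem row_orthonormal {n : ℕ} (U : unitaryGroup (Fin n) ℂ) (x y : Fin n) :
    ∑ j, (U : Matrix (Fin n) (Fin n) ℂ) x j * (starRingEnd ℂ)
      ((U : Matrix (Fin n) (Fin n) ℂ) y j) = if x = y then 1 else 0 := by
  have h := congrFun (congrFun (mem_unitaryGroup_iff.mp U.2) x) y
  rwa [Matrix.mul_apply, Matrix.one_apply] at h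

theorem column_norm {n : ℕ} (U : unitaryGroup (Fin n) ℂ) (i : Fin n) :
    ∑ x, (U : Matrix (Fin n) (Fin n) ℂ) x i * (starRingEnd ℂ)
      ((U : Matrix (Fin n) (Fin n) ℂ) x i) = 1 := by
  have h := congrFun (congrFun (mem_unitaryGroup_iff'.mp U.2) i) i
  rw [Matrix.mul_apply, Matrix.one_apply_eq] at h
  rw [← h]
  exact Finset.sum_congr rfl fun x _ => mul_comm _ _

theorem trace_block_self (U : unitaryGroup (Fin (d₁ * d₂)) ℂ) (i : Fin (d₁ * d₂)) :
    trace (block U i i) = 1 := by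
  rw [← column_norm U i, ← finProdFinEquiv.sum_comp, Fintype.sum_prod_type]
  rfl

theorem sum_block_self (U : unitaryGroup (Fin (d₁ * d₂)) ℂ) :
    ∑ j, block U j j = (d₂ : ℂ) • (1 : Matrix (Fin d₁) (Fin d₁) ℂ) := by
  ext a b
  rw [Matrix.sum_apply]
  simp only [block_apply]
  rw [Finset.sum_comm]
  simp only [row_orthonormal, EmbeddingLike.apply_eq_iff_eq, Prod.mk.injEq, and_true,
    Matrix.smul_apply, Matrix.one_apply]
  simp

/-- Completeness of the columns contracts a shared column index. -/
theorem sum_block_mul_block (U : unitaryGroup (Fin (d₁ * d₂)) ℂ) (i l : Fin (d₁ * d₂))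
    (a b c d : Fin d₁) :
    ∑ j, block U i j a b * block U j l c d = if b = c then block U i l a d else 0 := by
  simp only [block_apply, Finset.sum_mul_sum]
  rw [Finset.sum_comm]
  have h : ∀ k : Fin d₂, ∑ j, ∑ m : Fin d₂,
      (U : Matrix (Fin (d₁ * d₂)) (Fin (d₁ * d₂)) ℂ) (finProdFinEquiv (a, k)) i *
      (starRingEnd ℂ) ((U : Matrix (Fin (d₁ * d₂)) (Fin (d₁ * d₂)) ℂ) (finProdFinEquiv (b, k)) j) *
      ((U : Matrix (Fin (d₁ * d₂)) (Fin (d₁ * d₂)) ℂ) (finProdFinEquiv (c, m)) j *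
      (starRingEnd ℂ) ((U : Matrix (Fin (d₁ * d₂)) (Fin (d₁ * d₂)) ℂ) (finProdFinEquiv (d, m)) l))
      = if b = c then (U : Matrix (Fin (d₁ * d₂)) (Fin (d₁ * d₂)) ℂ) (finProdFinEquiv (a, k)) i *
      (starRingEnd ℂ) ((U : Matrix (Fin (d₁ * d₂)) (Fin (d₁ * d₂)) ℂ) (finProdFinEquiv (d, k)) l)
      else 0 := by
    intro k
    rw [Finset.sum_comm]
    have h2 : ∀ m : Fin d₂, ∑ j,
      (U : Matrix (Fin (d₁ * d₂)) (Fin (d₁ * d₂)) ℂ) (finProdFinEquiv (a, k)) i *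
      (starRingEnd ℂ) ((U : Matrix (Fin (d₁ * d₂)) (Fin (d₁ * d₂)) ℂ) (finProdFinEquiv (b, k)) j) *
      ((U : Matrix (Fin (d₁ * d₂)) (Fin (d₁ * d₂)) ℂ) (finProdFinEquiv (c, m)) j *
      (starRingEnd ℂ) ((U : Matrix (Fin (d₁ * d₂)) (Fin (d₁ * d₂)) ℂ) (finProdFinEquiv (d, m)) l))
      = (U : Matrix (Fin (d₁ * d₂)) (Fin (d₁ * d₂)) ℂ) (finProdFinEquiv (a, k)) i *
      (starRingEnd ℂ) ((U : Matrix (Fin (d₁ * d₂)) (Fin (d₁ * d₂)) ℂ) (finProdFinEquiv (d, m)) l) *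
      (if c = b ∧ m = k then 1 else 0) := by
      intro m
      have h3 := row_orthonormal U (finProdFinEquiv (c, m)) (finProdFinEquiv (b, k))
      simp only [EmbeddingLike.apply_eq_iff_eq, Prod.mk.injEq] at h3
      rw [← h3, Finset.mul_sum]
      exact Finset.sum_congr rfl fun j _ => by ring
    simp only [h2]
    by_cases hbc : b = c
    · simp [hbc]
    · simp [hbc, Ne.symm hbc]
  rw [Finset.sum_congr rfl fun k _ => h k]
  split_ifs <;> simp

/-- `∑ⱼ ρ_{ij} X ρ_{jl} = Tr(X) ρ_{il}`: contraction of `j` inside one trace, opening a loop. -/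
theorem sum_block_mul_mul_block (U : unitaryGroup (Fin (d₁ * d₂)) ℂ) (i l : Fin (d₁ * d₂))
    (X : Matrix (Fin d₁) (Fin d₁) ℂ) :
    ∑ j, block U i j * X * block U j l = trace X • block U i l := by
  ext a d
  have h : ∀ j, (block U i j * X * block U j l) a d =
      ∑ c, ∑ b, X b c * (block U i j a b * block U j l c d) := by
    intro j
    simp only [Matrix.mul_apply, Finset.sum_mul]
    exact Finset.sum_congr rfl fun c _ => Finset.sum_congr rfl fun b _ => by ring
  rw [Matrix.sum_apply, Finset.sum_congr rfl fun j _ => h j, Finset.sum_comm]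
  simp only [Finset.sum_comm (s := (Finset.univ : Finset (Fin (d₁ * d₂)))), ← Finset.mul_sum,
    sum_block_mul_block]
  simp [Matrix.trace, Finset.sum_mul]

/-- Contraction of a column index shared by two traces merges them into one. -/
theorem sum_trace_mul_trace (U : unitaryGroup (Fin (d₁ * d₂)) ℂ) (i l : Fin (d₁ * d₂))
    (X Y : Matrix (Fin d₁) (Fin d₁) ℂ) :
    ∑ j, trace (X * block U i j) * trace (Y * block U j l) = trace (Y * X * block U i l) := by
  have h : ∀ j, trace (X * block U i j) * trace (Y * block U j l) =
      ∑ d, ∑ c, ∑ b, ∑ a, X b a * Y d c * (block U i j a b * block U j l c d) := by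
    intro j
    simp only [Matrix.trace, Matrix.diag, Matrix.mul_apply, Finset.sum_mul, Finset.mul_sum]
    refine Finset.sum_congr rfl fun d _ => Finset.sum_congr rfl fun c _ =>
      Finset.sum_congr rfl fun b _ => Finset.sum_congr rfl fun a _ => by ring
  rw [Finset.sum_congr rfl fun j _ => h j, Finset.sum_comm]
  simp only [Finset.sum_comm (s := (Finset.univ : Finset (Fin (d₁ * d₂)))), ← Finset.mul_sum,
    sum_block_mul_block]
  simp only [Matrix.trace, Matrix.diag, Matrix.mul_apply, Finset.sum_mul]
  refine Finset.sum_congr rfl fun d _ => ?_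
  rw [Finset.sum_comm (f := fun a c => Y d c * X c a * block U i l a d)]
  refine Finset.sum_congr rfl fun c _ => ?_
  rw [Finset.sum_comm]
  refine Finset.sum_congr rfl fun a _ => ?_
  simp [mul_comm (Y d c)]

/-- The permutation matrix of `π` as a unitary: right multiplication by it permutes columns. -/
def permUnitary {n : ℕ} (π : Equiv.Perm (Fin n)) : unitaryGroup (Fin n) ℂ :=
  ⟨(1 : Matrix (Fin n) (Fin n) ℂ).submatrix id π, by
    rw [mem_unitaryGroup_iff, star_eq_conjTranspose, conjTranspose_submatrix, conjTranspose_one,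
      submatrix_mul_equiv, one_mul, submatrix_id_id]⟩

theorem block_mul_permUnitary (U : unitaryGroup (Fin (d₁ * d₂)) ℂ)
    (π : Equiv.Perm (Fin (d₁ * d₂))) (i j : Fin (d₁ * d₂)) :
    block (U * permUnitary π) i j = block U (π i) (π j) := by
  ext a b
  simp [block_apply, permUnitary, Matrix.mul_apply, Matrix.one_apply]

/-- The derivation on blocks induced by the infinitesimal right translation `U ↦ U K`, written
so as to be complex-linear in `K`; for skew-adjoint `K` it is the derivative of `block` along
`flow K`. -/
noncomputable def dblock (K : Matrix (Fin (d₁ * d₂)) (Fin (d₁ * d₂)) ℂ)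
    (U : unitaryGroup (Fin (d₁ * d₂)) ℂ) (i j : Fin (d₁ * d₂)) : Matrix (Fin d₁) (Fin d₁) ℂ :=
  ∑ k, K k i • block U k j - ∑ l, K j l • block U i l

theorem continuous_dblock (K : Matrix (Fin (d₁ * d₂)) (Fin (d₁ * d₂)) ℂ) (i j : Fin (d₁ * d₂)) :
    Continuous fun U => dblock K U i j := by
  have := @continuous_block d₁ d₂
  unfold dblock
  fun_prop

theorem dblock_add_smul (c : ℂ) (A B : Matrix (Fin (d₁ * d₂)) (Fin (d₁ * d₂)) ℂ)
    (U : unitaryGroup (Fin (d₁ * d₂)) ℂ) (i j : Fin (d₁ * d₂)) :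
    dblock (A + c • B) U i j = dblock A U i j + c • dblock B U i j := by
  simp only [dblock, Matrix.add_apply, Matrix.smul_apply, add_smul, Finset.sum_add_distrib,
    smul_assoc, ← Finset.smul_sum, smul_sub]
  abel

/-- The derivation for the elementary matrix `K = E_{qp}`, acting on column indices. -/
theorem dblock_single (p q : Fin (d₁ * d₂)) (U : unitaryGroup (Fin (d₁ * d₂)) ℂ)
    (i j : Fin (d₁ * d₂)) :
    dblock (Matrix.single q p 1) U i j =
      (if i = p then block U q j else 0) - (if j = q then block U i p else 0) := by
  simp only [dblock, Matrix.single_apply]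
  congr 1
  · by_cases h : i = p
    · simp [h]
    · simp [h, Ne.symm h]
  · by_cases h : j = q
    · simp [h]
    · simp [h, Ne.symm h]

theorem hasDerivAt_block (K : Matrix (Fin (d₁ * d₂)) (Fin (d₁ * d₂)) ℂ) (hK : star K = -K)
    (U : unitaryGroup (Fin (d₁ * d₂)) ℂ) (i j : Fin (d₁ * d₂)) (a b : Fin d₁) :
    HasDerivAt (fun t : ℝ => block (U * flow K hK t) i j a b) (dblock K U i j a b) 0 := by
  have hK' : ∀ l, (starRingEnd ℂ) (K l j) = -K j l := fun l =>
    congrFun (congrFun hK j) l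
  have hd : dblock K U i j a b = ∑ k : Fin d₂,
      (((U : Matrix (Fin (d₁ * d₂)) (Fin (d₁ * d₂)) ℂ) * K) (finProdFinEquiv (a, k)) i *
        (starRingEnd ℂ) ((U : Matrix (Fin (d₁ * d₂)) (Fin (d₁ * d₂)) ℂ)
          (finProdFinEquiv (b, k)) j) +
      (U : Matrix (Fin (d₁ * d₂)) (Fin (d₁ * d₂)) ℂ) (finProdFinEquiv (a, k)) i *
        (starRingEnd ℂ) (((U : Matrix (Fin (d₁ * d₂)) (Fin (d₁ * d₂)) ℂ) * K)
          (finProdFinEquiv (b, k)) j)) := by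
    simp only [dblock, Matrix.sub_apply, Matrix.sum_apply, Matrix.smul_apply, block_apply,
      Matrix.mul_apply, map_sum, map_mul, hK', smul_eq_mul, Finset.mul_sum, Finset.sum_mul,
      Finset.sum_add_distrib, mul_neg, Finset.sum_neg_distrib, sub_eq_add_neg]
    rw [Finset.sum_comm]
    congr 1
    · exact Finset.sum_congr rfl fun _ _ => Finset.sum_congr rfl fun _ _ => by ring
    · rw [Finset.sum_comm]
      congr 1
      exact Finset.sum_congr rfl fun _ _ => Finset.sum_congr rfl fun _ _ => by ring
  rw [hd]
  simp only [block_apply]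
  have hz : U * flow K hK 0 = U := by rw [flow_zero, mul_one]
  refine HasDerivAt.fun_sum fun k _ => ?_
  have h2 : HasDerivAt (fun t : ℝ => (starRingEnd ℂ) (((U * flow K hK t :
      unitaryGroup (Fin (d₁ * d₂)) ℂ) : Matrix (Fin (d₁ * d₂)) (Fin (d₁ * d₂)) ℂ)
        (finProdFinEquiv (b, k)) j)) ((starRingEnd ℂ) (((U : Matrix (Fin (d₁ * d₂))
          (Fin (d₁ * d₂)) ℂ) * K) (finProdFinEquiv (b, k)) j)) 0 :=
    (hasDerivAt_flow K hK U (finProdFinEquiv (b, k)) j).star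
  have h := (hasDerivAt_flow K hK U (finProdFinEquiv (a, k)) i).fun_mul h2
  simp only [hz] at h
  exact h

end Blocks

/-! ### Moments and their relations -/

section Expectation

variable {d₁ d₂ : ℕ}

/-- Expectation against `μ`, as a linear functional on continuous functions. -/
noncomputable def expect {n : ℕ} (μ : Measure (unitaryGroup (Fin n) ℂ)) [μ.IsHaarMeasure] :
    C(unitaryGroup (Fin n) ℂ, ℂ) →ₗ[ℂ] ℂ where
  toFun f := ∫ U, f U ∂μ
  map_add' f g := integral_add (integrable_of_continuous μ f.continuous)
    (integrable_of_continuous μ g.continuous)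
  map_smul' c _ := integral_const_mul c _

theorem expect_one {n : ℕ} (μ : Measure (unitaryGroup (Fin n) ℂ)) [μ.IsHaarMeasure]
    [IsProbabilityMeasure μ] : expect μ 1 = 1 := by
  simp [expect]

/-- `Tr(ρ_{ij} ρ_{kl})` as a continuous function of `U`. -/
noncomputable def T2 (i j k l : Fin (d₁ * d₂)) : C(unitaryGroup (Fin (d₁ * d₂)) ℂ, ℂ) where
  toFun U := trace (block U i j * block U k l)
  continuous_toFun := ((continuous_block i j).matrix_mul (continuous_block k l)).matrix_trace

/-- `Tr(ρ_{ij} ρ_{kl} ρ_{xy})` as a continuous function of `U`. -/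
noncomputable def T3 (i j k l x y : Fin (d₁ * d₂)) : C(unitaryGroup (Fin (d₁ * d₂)) ℂ, ℂ) where
  toFun U := trace (block U i j * block U k l * block U x y)
  continuous_toFun := (((continuous_block i j).matrix_mul (continuous_block k l)).matrix_mul
    (continuous_block x y)).matrix_trace

/-- The image of `T2` under the derivation `dblock K`, by the Leibniz rule. -/
noncomputable def dT2 (K : Matrix (Fin (d₁ * d₂)) (Fin (d₁ * d₂)) ℂ) (i j k l : Fin (d₁ * d₂)) :
    C(unitaryGroup (Fin (d₁ * d₂)) ℂ, ℂ) where
  toFun U := trace (dblock K U i j * block U k l + block U i j * dblock K U k l)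
  continuous_toFun := (((continuous_dblock K i j).matrix_mul (continuous_block k l)).add
    ((continuous_block i j).matrix_mul (continuous_dblock K k l))).matrix_trace

/-- The image of `T3` under the derivation `dblock K`, by the Leibniz rule. -/
noncomputable def dT3 (K : Matrix (Fin (d₁ * d₂)) (Fin (d₁ * d₂)) ℂ)
    (i j k l x y : Fin (d₁ * d₂)) : C(unitaryGroup (Fin (d₁ * d₂)) ℂ, ℂ) where
  toFun U := trace ((dblock K U i j * block U k l + block U i j * dblock K U k l) * block U x y +
    block U i j * block U k l * dblock K U x y)
  continuous_toFun := (((((continuous_dblock K i j).matrix_mul (continuous_block k l)).add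
    ((continuous_block i j).matrix_mul (continuous_dblock K k l))).matrix_mul
    (continuous_block x y)).add (((continuous_block i j).matrix_mul
    (continuous_block k l)).matrix_mul (continuous_dblock K x y))).matrix_trace

theorem hasDerivAt_matrix_mul {m : ℕ} {A B : ℝ → Matrix (Fin m) (Fin m) ℂ}
    {A' B' : Matrix (Fin m) (Fin m) ℂ} {t : ℝ}
    (hA : ∀ a b, HasDerivAt (fun s => A s a b) (A' a b) t)
    (hB : ∀ a b, HasDerivAt (fun s => B s a b) (B' a b) t) (a b : Fin m) :
    HasDerivAt (fun s => (A s * B s) a b) ((A' * B t + A t * B') a b) t := by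
  simp only [Matrix.add_apply, Matrix.mul_apply, ← Finset.sum_add_distrib]
  exact HasDerivAt.fun_sum fun c _ => (hA a c).fun_mul (hB c b)

theorem hasDerivAt_matrix_trace {m : ℕ} {A : ℝ → Matrix (Fin m) (Fin m) ℂ}
    {A' : Matrix (Fin m) (Fin m) ℂ} {t : ℝ}
    (hA : ∀ a b, HasDerivAt (fun s => A s a b) (A' a b) t) :
    HasDerivAt (fun s => trace (A s)) (trace A') t :=
  HasDerivAt.fun_sum fun c _ => hA c c

theorem mul_flow_zero {n : ℕ} (K : Matrix (Fin n) (Fin n) ℂ) (hK : star K = -K)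
    (U : unitaryGroup (Fin n) ℂ) : U * flow K hK 0 = U := by
  rw [flow_zero, mul_one]

theorem hasDerivAt_T2 (K : Matrix (Fin (d₁ * d₂)) (Fin (d₁ * d₂)) ℂ) (hK : star K = -K)
    (U : unitaryGroup (Fin (d₁ * d₂)) ℂ) (i j k l : Fin (d₁ * d₂)) :
    HasDerivAt (fun t : ℝ => T2 i j k l (U * flow K hK t)) (dT2 K i j k l U) 0 := by
  have h := hasDerivAt_matrix_trace (hasDerivAt_matrix_mul (hasDerivAt_block K hK U i j)
    (hasDerivAt_block K hK U k l))
  simp only [mul_flow_zero] at h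
  exact h

theorem hasDerivAt_T3 (K : Matrix (Fin (d₁ * d₂)) (Fin (d₁ * d₂)) ℂ) (hK : star K = -K)
    (U : unitaryGroup (Fin (d₁ * d₂)) ℂ) (i j k l x y : Fin (d₁ * d₂)) :
    HasDerivAt (fun t : ℝ => T3 i j k l x y (U * flow K hK t)) (dT3 K i j k l x y U) 0 := by
  have h := hasDerivAt_matrix_trace (hasDerivAt_matrix_mul (hasDerivAt_matrix_mul
    (hasDerivAt_block K hK U i j) (hasDerivAt_block K hK U k l)) (hasDerivAt_block K hK U x y))
  simp only [mul_flow_zero] at h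
  exact h

theorem dT2_add_smul (c : ℂ) (A B : Matrix (Fin (d₁ * d₂)) (Fin (d₁ * d₂)) ℂ)
    (U : unitaryGroup (Fin (d₁ * d₂)) ℂ) (i j k l : Fin (d₁ * d₂)) :
    dT2 (A + c • B) i j k l U = dT2 A i j k l U + c * dT2 B i j k l U := by
  simp only [dT2, ContinuousMap.coe_mk, dblock_add_smul, add_mul, mul_add, Matrix.smul_mul,
    Matrix.mul_smul, trace_add, trace_smul, smul_eq_mul]
  ring

theorem dT3_add_smul (c : ℂ) (A B : Matrix (Fin (d₁ * d₂)) (Fin (d₁ * d₂)) ℂ)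
    (U : unitaryGroup (Fin (d₁ * d₂)) ℂ) (i j k l x y : Fin (d₁ * d₂)) :
    dT3 (A + c • B) i j k l x y U = dT3 A i j k l x y U + c * dT3 B i j k l x y U := by
  simp only [dT3, ContinuousMap.coe_mk, dblock_add_smul, add_mul, mul_add, Matrix.smul_mul,
    Matrix.mul_smul, trace_add, trace_smul, smul_eq_mul]
  ring

/-- For `K = E_{qp}` the derivation replaces the ket index `p` by `q` and the bra index `q` by
`-p`, one occurrence at a time. -/
theorem dT2_single (p q i j k l : Fin (d₁ * d₂)) :
    (dT2 (Matrix.single q p 1) i j k l : C(unitaryGroup (Fin (d₁ * d₂)) ℂ, ℂ)) =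
      (if i = p then T2 q j k l else 0) - (if j = q then T2 i p k l else 0) +
      (if k = p then T2 i j q l else 0) - (if l = q then T2 i j k p else 0) := by
  ext U
  simp only [dT2, T2, dblock_single, ContinuousMap.coe_mk, ContinuousMap.add_apply,
    ContinuousMap.sub_apply]
  split_ifs <;> simp [sub_mul, mul_sub] <;> ring

theorem dT3_single (p q i j k l x y : Fin (d₁ * d₂)) :
    (dT3 (Matrix.single q p 1) i j k l x y : C(unitaryGroup (Fin (d₁ * d₂)) ℂ, ℂ)) =
      (if i = p then T3 q j k l x y else 0) - (if j = q then T3 i p k l x y else 0) +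
      (if k = p then T3 i j q l x y else 0) - (if l = q then T3 i j k p x y else 0) +
      (if x = p then T3 i j k l q y else 0) - (if y = q then T3 i j k l x p else 0) := by
  ext U
  simp only [dT3, T3, dblock_single, ContinuousMap.coe_mk, ContinuousMap.add_apply,
    ContinuousMap.sub_apply, sub_mul, mul_sub, add_mul, trace_add, trace_sub]
  simp only [apply_ite (fun M : Matrix (Fin d₁) (Fin d₁) ℂ => M * block U k l),
    apply_ite (fun M : Matrix (Fin d₁) (Fin d₁) ℂ => M * block U x y),
    apply_ite (fun M : Matrix (Fin d₁) (Fin d₁) ℂ => block U i j * M),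
    apply_ite (fun M : Matrix (Fin d₁) (Fin d₁) ℂ => block U i j * block U k l * M),
    apply_ite (fun f : C(unitaryGroup (Fin (d₁ * d₂)) ℂ, ℂ) => f U),
    apply_ite (trace : Matrix (Fin d₁) (Fin d₁) ℂ → ℂ), zero_mul, mul_zero, trace_zero,
    ContinuousMap.coe_mk, ContinuousMap.zero_apply]
  ring

variable (μ : Measure (unitaryGroup (Fin (d₁ * d₂)) ℂ)) [μ.IsHaarMeasure]
  [IsProbabilityMeasure μ]

/-- Infinitesimal right invariance, applied to `T2`. -/
theorem expect_dT2 (p q i j k l : Fin (d₁ * d₂)) :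
    expect μ (dT2 (Matrix.single q p 1) i j k l) = 0 :=
  integral_deriv μ (T2 i j k l) (fun K => dT2 K i j k l) (T2 i j k l).continuous
    (fun K => (dT2 K i j k l).continuous) (fun c A B U => dT2_add_smul c A B U i j k l)
    (fun K hK U => hasDerivAt_T2 K hK U i j k l) _

theorem expect_dT3 (p q i j k l x y : Fin (d₁ * d₂)) :
    expect μ (dT3 (Matrix.single q p 1) i j k l x y) = 0 :=
  integral_deriv μ (T3 i j k l x y) (fun K => dT3 K i j k l x y) (T3 i j k l x y).continuous
    (fun K => (dT3 K i j k l x y).continuous) (fun c A B U => dT3_add_smul c A B U i j k l x y)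
    (fun K hK U => hasDerivAt_T3 K hK U i j k l x y) _

theorem expect_dT2_mul_T2 (p q i j k l a b c d : Fin (d₁ * d₂)) :
    expect μ (dT2 (Matrix.single q p 1) i j k l * T2 a b c d +
      T2 i j k l * dT2 (Matrix.single q p 1) a b c d) = 0 := by
  refine integral_deriv μ (T2 i j k l * T2 a b c d)
    (fun K => dT2 K i j k l * T2 a b c d + T2 i j k l * dT2 K a b c d)
    (T2 i j k l * T2 a b c d).continuous
    (fun K => (dT2 K i j k l * T2 a b c d + T2 i j k l * dT2 K a b c d).continuous) ?_ ?_ _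
  · intro z A B U
    simp only [Pi.add_apply, Pi.mul_apply, dT2_add_smul]
    ring
  · intro K hK U
    have h := (hasDerivAt_T2 K hK U i j k l).fun_mul (hasDerivAt_T2 K hK U a b c d)
    simp only [mul_flow_zero] at h
    exact h

/-- Right invariance under permutation matrices: column indices may be permuted. -/
theorem expect_T2_perm (π : Equiv.Perm (Fin (d₁ * d₂))) (i j k l : Fin (d₁ * d₂)) :
    expect μ (T2 (π i) (π j) (π k) (π l)) = expect μ (T2 i j k l) := by
  have h := integral_mul_right μ (fun U => T2 i j k l U) (permUnitary π)
  simp only [T2, ContinuousMap.coe_mk, block_mul_permUnitary] at h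
  exact h

theorem expect_T3_perm (π : Equiv.Perm (Fin (d₁ * d₂))) (i j k l x y : Fin (d₁ * d₂)) :
    expect μ (T3 (π i) (π j) (π k) (π l) (π x) (π y)) = expect μ (T3 i j k l x y) := by
  have h := integral_mul_right μ (fun U => T3 i j k l x y U) (permUnitary π)
  simp only [T3, ContinuousMap.coe_mk, block_mul_permUnitary] at h
  exact h

theorem expect_T2_mul_T2_perm (π : Equiv.Perm (Fin (d₁ * d₂))) (i j k l a b c d : Fin (d₁ * d₂)) :
    expect μ (T2 (π i) (π j) (π k) (π l) * T2 (π a) (π b) (π c) (π d)) =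
      expect μ (T2 i j k l * T2 a b c d) := by
  have h := integral_mul_right μ (fun U => T2 i j k l U * T2 a b c d U) (permUnitary π)
  simp only [T2, ContinuousMap.coe_mk, block_mul_permUnitary] at h
  exact h

theorem T2_comm (i j k l : Fin (d₁ * d₂)) :
    (T2 i j k l : C(unitaryGroup (Fin (d₁ * d₂)) ℂ, ℂ)) = T2 k l i j := by
  ext U
  exact trace_mul_comm (block U i j) (block U k l)

theorem sum_T2_diag (i : Fin (d₁ * d₂)) :
    ∑ j, (T2 i i j j : C(unitaryGroup (Fin (d₁ * d₂)) ℂ, ℂ)) = (d₂ : ℂ) • 1 := by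
  ext U
  simp only [ContinuousMap.sum_apply, T2, ContinuousMap.coe_mk, ← trace_sum, ← Finset.mul_sum,
    sum_block_self]
  simp [trace_block_self]

theorem sum_T2_loop (i : Fin (d₁ * d₂)) :
    ∑ j, (T2 i j j i : C(unitaryGroup (Fin (d₁ * d₂)) ℂ, ℂ)) = (d₁ : ℂ) • 1 := by
  ext U
  have h := sum_block_mul_mul_block U i i 1
  simp only [mul_one] at h
  simp only [ContinuousMap.sum_apply, T2, ContinuousMap.coe_mk, ← trace_sum, h]
  simp [trace_block_self]

theorem sum_T3_diag (i : Fin (d₁ * d₂)) :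
    ∑ j, (T3 i i i i j j : C(unitaryGroup (Fin (d₁ * d₂)) ℂ, ℂ)) = (d₂ : ℂ) • T2 i i i i := by
  ext U
  simp only [ContinuousMap.sum_apply, T3, T2, ContinuousMap.coe_mk, ← trace_sum,
    ← Finset.mul_sum, sum_block_self]
  simp

theorem sum_T3_loop (i : Fin (d₁ * d₂)) :
    ∑ j, (T3 i i i j j i : C(unitaryGroup (Fin (d₁ * d₂)) ℂ, ℂ)) = (d₁ : ℂ) • T2 i i i i := by
  ext U
  have h := sum_block_mul_mul_block U i i 1
  simp only [mul_one] at h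
  simp only [ContinuousMap.sum_apply, T3, T2, ContinuousMap.coe_mk, ← trace_sum, mul_assoc,
    ← Finset.mul_sum, h]
  simp

theorem sum_T3_skip (i : Fin (d₁ * d₂)) :
    ∑ j, (T3 i j i i j i : C(unitaryGroup (Fin (d₁ * d₂)) ℂ, ℂ)) = 1 := by
  ext U
  simp only [ContinuousMap.sum_apply, T3, ContinuousMap.coe_mk, ← trace_sum,
    sum_block_mul_mul_block]
  simp [trace_block_self]

/-- The contraction that links products of two `T2` to the cubic moments. -/
theorem sum_T2_mul_T2_loop (i k : Fin (d₁ * d₂)) :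
    ∑ j, (T2 i i k j * T2 i i j k : C(unitaryGroup (Fin (d₁ * d₂)) ℂ, ℂ)) = T3 i i i i k k := by
  ext U
  simp only [ContinuousMap.sum_apply, ContinuousMap.mul_apply, T3, T2, ContinuousMap.coe_mk,
    sum_trace_mul_trace]

end Expectation

/-! ### The linear system -/

section System

/-- A sum over all columns whose terms agree away from `o`. -/
theorem sum_split_one {n : ℕ} (g : Fin n → ℂ) (c : ℂ) (o : Fin n) (h : ∀ j, j ≠ o → g j = c) :
    ∑ j, g j = ((n : ℂ) - 1) * c + g o := by
  have h1 : ∀ j, g j = c + (if j = o then g o - c else 0) := by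
    intro j
    by_cases hj : j = o
    · simp [hj]
    · simp [hj, h j hj]
  rw [Finset.sum_congr rfl fun j _ => h1 j, Finset.sum_add_distrib]
  simp
  ring

theorem sum_split_two {n : ℕ} (g : Fin n → ℂ) (c : ℂ) (o p : Fin n) (hop : o ≠ p)
    (h : ∀ j, j ≠ o → j ≠ p → g j = c) :
    ∑ j, g j = ((n : ℂ) - 2) * c + g o + g p := by
  have h1 := sum_split_one (fun j => if j = o then c else g j) c p fun j hj => by
    by_cases hjo : j = o
    · simp [hjo]
    · simp [hjo, h j hjo hj]
  have h2 := sum_split_one (fun j => g j - (if j = o then c else g j)) 0 o fun j hj => by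
    simp [hj]
  rw [Finset.sum_sub_distrib, h1] at h2
  simp only [hop.symm, if_true, if_false] at h2
  linear_combination h2

theorem sum_split_three {n : ℕ} (g : Fin n → ℂ) (c : ℂ) (o p q : Fin n) (hop : o ≠ p)
    (hoq : o ≠ q) (hpq : p ≠ q) (h : ∀ j, j ≠ o → j ≠ p → j ≠ q → g j = c) :
    ∑ j, g j = ((n : ℂ) - 3) * c + g o + g p + g q := by
  have h1 := sum_split_two (fun j => if j = o then c else g j) c p q hpq fun j hj hj' => by
    by_cases hjo : j = o
    · simp [hjo]
    · simp [hjo, h j hjo hj hj']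
  have h2 := sum_split_one (fun j => g j - (if j = o then c else g j)) 0 o fun j hj => by
    simp [hj]
  rw [Finset.sum_sub_distrib, h1] at h2
  simp only [hop.symm, hoq.symm, if_true, if_false] at h2
  linear_combination h2

/-- The linear system satisfied by the moments determines the moment `F` of four distinct
columns. With `0, 1, 2, 3` for distinct columns, the unknowns stand for the expectations of

* `A = Tr ρ₀₀ρ₀₀`, `e = Tr ρ₀₀ρ₁₁`, `S = Tr ρ₀₁ρ₁₀`;
* `T = Tr ρ₀₀ρ₀₀ρ₀₀`, `Q₁ = Tr ρ₀₁ρ₀₀ρ₁₀`, `Q₂ = Tr ρ₀₀ρ₀₁ρ₁₀`, `Z = Tr ρ₀₀ρ₀₀ρ₁₁`;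
* `B = (Tr ρ₀₀ρ₀₀)²`, `Y = Tr ρ₀₀ρ₀₁ · Tr ρ₀₀ρ₁₀`, `Y₂ = Tr ρ₀₀ρ₀₀ · Tr ρ₀₁ρ₁₀`,
  `K = Tr ρ₀₀ρ₀₀ · Tr ρ₀₀ρ₁₁`;
* `C = (Tr ρ₀₀ρ₁₁)²`, `X = Tr ρ₀₀ρ₁₂ · Tr ρ₀₀ρ₂₁`, `G = Tr ρ₀₀ρ₁₁ · Tr ρ₀₀ρ₂₂`;
* `D = Tr ρ₀₀ρ₀₀ · Tr ρ₁₁ρ₁₁`, `X₂ = Tr ρ₀₀ρ₀₀ · Tr ρ₁₂ρ₂₁`, `H = Tr ρ₀₀ρ₀₀ · Tr ρ₁₁ρ₂₂`;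
* `F = Tr ρ₀₀ρ₁₁ · Tr ρ₂₂ρ₃₃`.

The relations `h1`, `h4`, `h8`, `h12`, `h15` come from infinitesimal invariance, the others from
completeness of the columns. -/
theorem solve_system {d₁ d₂ N A e S T Q₁ Q₂ Z B Y Y₂ K C X G D X₂ H F : ℂ} (hN : N = d₁ * d₂)
    (n0 : N ≠ 0) (n1 : N - 1 ≠ 0) (n2 : N - 2 ≠ 0) (n3 : N - 3 ≠ 0)
    (m1 : N + 1 ≠ 0) (m2 : N + 2 ≠ 0) (m3 : N + 3 ≠ 0)
    (h1 : A = S + e) (h2 : d₂ = (N - 1) * e + A) (h3 : d₁ = (N - 1) * S + A)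
    (h4 : T = Q₁ + Q₂ + Z) (h5 : 1 = (N - 1) * Q₁ + T) (h6 : d₁ * A = (N - 1) * Q₂ + T)
    (h7 : d₂ * A = (N - 1) * Z + T)
    (h8 : B = Y₂ + K + 2 * Y) (h9 : T = (N - 1) * Y + B) (h10 : d₁ * A = (N - 1) * Y₂ + B)
    (h11 : d₂ * A = (N - 1) * K + B)
    (h12 : C = G + X) (h13 : Z = (N - 2) * X + Y + C) (h14 : d₂ * e = (N - 2) * G + K + C)
    (h15 : D = H + X₂) (h16 : d₁ * A = (N - 2) * X₂ + Y₂ + D)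
    (h17 : d₂ * A = (N - 2) * H + K + D)
    (h18 : d₂ * e = (N - 3) * F + G + G + H) :
    F = ((d₂ ^ 2 - 1) * (d₂ ^ 2 * (d₂ ^ 2 - 1) * d₁ ^ 4 + 2 * (7 - 6 * d₂ ^ 2) * d₁ ^ 2 + 22)) /
      (d₁ ^ 2 * d₂ ^ 2 * (d₁ ^ 2 * d₂ ^ 2 - 7) ^ 2 - 36) := by
  -- closed equations for the five moments in which the infinitesimal relations originate
  have hA : (N + 1) * A = d₁ + d₂ := by linear_combination (N - 1) * h1 - h2 - h3
  have hT : (N + 2) * T = 1 + (d₁ + d₂) * A := by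
    linear_combination (N - 1) * h4 - h5 - h6 - h7
  have hB : (N + 3) * B = (d₁ + d₂) * A + 2 * T := by
    linear_combination (N - 1) * h8 - 2 * h9 - h10 - h11
  have hC : N * C = Z - Y + d₂ * e - K := by
    linear_combination (N - 2) * h12 - h13 - h14
  have hD : N * D = d₁ * A - Y₂ + d₂ * A - K := by
    linear_combination (N - 2) * h15 - h16 - h17
  have eA : A = (d₁ + d₂) / (N + 1) := by field_simp; linear_combination hA
  have eT : T = (1 + (d₁ + d₂) * A) / (N + 2) := by field_simp; linear_combination hT
  have eB : B = ((d₁ + d₂) * A + 2 * T) / (N + 3) := by field_simp; linear_combination hB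
  have ee : e = (d₂ - A) / (N - 1) := by field_simp; linear_combination -h2
  have eZ : Z = (d₂ * A - T) / (N - 1) := by field_simp; linear_combination -h7
  have eY : Y = (T - B) / (N - 1) := by field_simp; linear_combination -h9
  have eY₂ : Y₂ = (d₁ * A - B) / (N - 1) := by field_simp; linear_combination -h10
  have eK : K = (d₂ * A - B) / (N - 1) := by field_simp; linear_combination -h11
  have eC : C = (Z - Y + d₂ * e - K) / N := by field_simp; linear_combination hC
  have eD : D = (d₁ * A - Y₂ + d₂ * A - K) / N := by field_simp; linear_combination hD
  have eG : G = (d₂ * e - K - C) / (N - 2) := by field_simp; linear_combination -h14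
  have eH : H = (d₂ * A - K - D) / (N - 2) := by field_simp; linear_combination -h17
  have eF : F = (d₂ * e - G - G - H) / (N - 3) := by field_simp; linear_combination -h18
  have hden : d₁ ^ 2 * d₂ ^ 2 * (d₁ ^ 2 * d₂ ^ 2 - 7) ^ 2 - 36 =
      (N - 1) * (N + 1) * (N - 2) * (N + 2) * (N - 3) * (N + 3) := by
    rw [hN]; ring
  rw [hden, eF, eG, eH, eC, eD, eK, eY₂, eY, eZ, ee, eB, eT, eA]
  field_simp
  rw [hN]
  ring

end System

/-! ### The moment of four distinct columns -/

section Relations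

variable {d₁ d₂ : ℕ} (μ : Measure (unitaryGroup (Fin (d₁ * d₂)) ℂ)) [μ.IsHaarMeasure]
  [IsProbabilityMeasure μ]

/-- The four-column moment, for any four distinct columns: the eighteen relations are derived and
handed to `solve_system`. -/
theorem expect_four_columns {o p q r : Fin (d₁ * d₂)} (hd : 4 ≤ d₁ * d₂) (hop : o ≠ p)
    (hoq : o ≠ q) (hor : o ≠ r) (hpq : p ≠ q) (hpr : p ≠ r) (hqr : q ≠ r) :
    expect μ (T2 o o p p * T2 q q r r) =
      (((d₂ : ℂ) ^ 2 - 1) * ((d₂ : ℂ) ^ 2 * ((d₂ : ℂ) ^ 2 - 1) * (d₁ : ℂ) ^ 4 +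
        2 * (7 - 6 * (d₂ : ℂ) ^ 2) * (d₁ : ℂ) ^ 2 + 22)) /
      ((d₁ : ℂ) ^ 2 * (d₂ : ℂ) ^ 2 * ((d₁ : ℂ) ^ 2 * (d₂ : ℂ) ^ 2 - 7) ^ 2 - 36) := by
  have sw : ∀ {a b c : Fin (d₁ * d₂)}, c ≠ a → c ≠ b → Equiv.swap a b c = c :=
    fun h hb => Equiv.swap_apply_of_ne_of_ne h hb
  -- infinitesimal invariance, applied to monomials in which the ket and bra indices differ by
  -- one replacement, so that every resulting moment is balanced
  have h1 := expect_dT2 μ p o o o p o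
  have h4 := expect_dT3 μ p o o o o o p o
  have h8 := expect_dT2_mul_T2 μ p o o o o o o o p o
  have h12 := expect_dT2_mul_T2 μ q p o o p p o o q p
  have h15 := expect_dT2_mul_T2 μ q p o o o o p p q p
  simp only [dT2_single, dT3_single, hop, hoq, hpq, if_true, if_false, sub_zero, add_zero,
    zero_add, zero_sub, sub_mul, mul_sub, mul_add, neg_mul, mul_neg, zero_mul, map_add, map_sub,
    map_neg] at h1 h4 h8 h12 h15
  rw [T2_comm o p o o] at h8
  -- completeness of the columns; by permutation invariance all but at most three terms of each
  -- sum over columns agree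
  have h2 := congrArg (expect μ) (sum_T2_diag o)
  simp only [map_sum, map_smul, smul_eq_mul, expect_one] at h2
  rw [sum_split_one _ (expect μ (T2 o o p p)) o fun j hjo => by
    simpa only [Equiv.swap_apply_left, sw hop (Ne.symm hjo)] using
      expect_T2_perm μ (Equiv.swap p j) o o p p] at h2
  have h3 := congrArg (expect μ) (sum_T2_loop o)
  simp only [map_sum, map_smul, smul_eq_mul, expect_one] at h3
  rw [sum_split_one _ (expect μ (T2 o p p o)) o fun j hjo => by
    simpa only [Equiv.swap_apply_left, sw hop (Ne.symm hjo)] using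
      expect_T2_perm μ (Equiv.swap p j) o p p o] at h3
  have h5 := congrArg (expect μ) (sum_T3_skip o)
  simp only [map_sum, expect_one] at h5
  rw [sum_split_one _ (expect μ (T3 o p o o p o)) o fun j hjo => by
    simpa only [Equiv.swap_apply_left, sw hop (Ne.symm hjo)] using
      expect_T3_perm μ (Equiv.swap p j) o p o o p o] at h5
  have h6 := congrArg (expect μ) (sum_T3_loop o)
  simp only [map_sum, map_smul, smul_eq_mul] at h6
  rw [sum_split_one _ (expect μ (T3 o o o p p o)) o fun j hjo => by
    simpa only [Equiv.swap_apply_left, sw hop (Ne.symm hjo)] using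
      expect_T3_perm μ (Equiv.swap p j) o o o p p o] at h6
  have h7 := congrArg (expect μ) (sum_T3_diag o)
  simp only [map_sum, map_smul, smul_eq_mul] at h7
  rw [sum_split_one _ (expect μ (T3 o o o o p p)) o fun j hjo => by
    simpa only [Equiv.swap_apply_left, sw hop (Ne.symm hjo)] using
      expect_T3_perm μ (Equiv.swap p j) o o o o p p] at h7
  have h9 := congrArg (expect μ) (sum_T2_mul_T2_loop o o)
  simp only [map_sum] at h9
  rw [sum_split_one _ (expect μ (T2 o o o p * T2 o o p o)) o fun j hjo => by
    simpa only [Equiv.swap_apply_left, sw hop (Ne.symm hjo)] using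
      expect_T2_mul_T2_perm μ (Equiv.swap p j) o o o p o o p o] at h9
  have h10 := congrArg (fun f => expect μ (T2 o o o o * f)) (sum_T2_loop o)
  simp only [Finset.mul_sum, map_sum, mul_smul_comm, mul_one, map_smul, smul_eq_mul] at h10
  rw [sum_split_one _ (expect μ (T2 o o o o * T2 o p p o)) o fun j hjo => by
    simpa only [Equiv.swap_apply_left, sw hop (Ne.symm hjo)] using
      expect_T2_mul_T2_perm μ (Equiv.swap p j) o o o o o p p o] at h10
  have h11 := congrArg (fun f => expect μ (T2 o o o o * f)) (sum_T2_diag o)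
  simp only [Finset.mul_sum, map_sum, mul_smul_comm, mul_one, map_smul, smul_eq_mul] at h11
  rw [sum_split_one _ (expect μ (T2 o o o o * T2 o o p p)) o fun j hjo => by
    simpa only [Equiv.swap_apply_left, sw hop (Ne.symm hjo)] using
      expect_T2_mul_T2_perm μ (Equiv.swap p j) o o o o o o p p] at h11
  have h13 := congrArg (expect μ) (sum_T2_mul_T2_loop o p)
  simp only [map_sum] at h13
  rw [sum_split_two _ (expect μ (T2 o o p q * T2 o o q p)) o p hop fun j hjo hjp => by
    simpa only [Equiv.swap_apply_left, sw hoq (Ne.symm hjo), sw hpq (Ne.symm hjp)] using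
      expect_T2_mul_T2_perm μ (Equiv.swap q j) o o p q o o q p] at h13
  have h14 := congrArg (fun f => expect μ (T2 o o p p * f)) (sum_T2_diag o)
  simp only [Finset.mul_sum, map_sum, mul_smul_comm, mul_one, map_smul, smul_eq_mul] at h14
  rw [sum_split_two _ (expect μ (T2 o o p p * T2 o o q q)) o p hop fun j hjo hjp => by
    simpa only [Equiv.swap_apply_left, sw hoq (Ne.symm hjo), sw hpq (Ne.symm hjp)] using
      expect_T2_mul_T2_perm μ (Equiv.swap q j) o o p p o o q q] at h14
  have h16 := congrArg (fun f => expect μ (T2 o o o o * f)) (sum_T2_loop p)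
  simp only [Finset.mul_sum, map_sum, mul_smul_comm, mul_one, map_smul, smul_eq_mul] at h16
  rw [sum_split_two _ (expect μ (T2 o o o o * T2 p q q p)) o p hop fun j hjo hjp => by
    simpa only [Equiv.swap_apply_left, sw hoq (Ne.symm hjo), sw hpq (Ne.symm hjp)] using
      expect_T2_mul_T2_perm μ (Equiv.swap q j) o o o o p q q p] at h16
  have h17 := congrArg (fun f => expect μ (T2 o o o o * f)) (sum_T2_diag p)
  simp only [Finset.mul_sum, map_sum, mul_smul_comm, mul_one, map_smul, smul_eq_mul] at h17
  rw [sum_split_two _ (expect μ (T2 o o o o * T2 p p q q)) o p hop fun j hjo hjp => by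
    simpa only [Equiv.swap_apply_left, sw hoq (Ne.symm hjo), sw hpq (Ne.symm hjp)] using
      expect_T2_mul_T2_perm μ (Equiv.swap q j) o o o o p p q q] at h17
  have h18 := congrArg (fun f => expect μ (T2 o o p p * f)) (sum_T2_diag q)
  simp only [Finset.mul_sum, map_sum, mul_smul_comm, mul_one, map_smul, smul_eq_mul] at h18
  rw [sum_split_three _ (expect μ (T2 o o p p * T2 q q r r)) o p q hop hoq hpq
    fun j hjo hjp hjq => by
    simpa only [Equiv.swap_apply_left, sw hor (Ne.symm hjo), sw hpr (Ne.symm hjp),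
      sw hqr (Ne.symm hjq)] using
      expect_T2_mul_T2_perm μ (Equiv.swap r j) o o p p q q r r] at h18
  -- identification of the remaining moments with the chosen unknowns
  rw [mul_comm (T2 o o p o) (T2 o o o p)] at h13
  rw [mul_comm (T2 o o p p) (T2 o o o o)] at h14
  rw [T2_comm p o o p] at h16
  rw [T2_comm p p o o] at h17
  have g1 : expect μ (T2 o o p p * T2 q q p p) = expect μ (T2 o o p p * T2 o o q q) := by
    have h := expect_T2_mul_T2_perm μ (Equiv.swap o p) o o p p o o q q
    simp only [Equiv.swap_apply_left, Equiv.swap_apply_right, sw hoq.symm hpq.symm] at h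
    rw [← h, T2_comm p p o o, T2_comm q q p p]
  have g2 : expect μ (T2 o o p p * T2 q q q q) = expect μ (T2 o o o o * T2 p p q q) := by
    have h := expect_T2_mul_T2_perm μ (Equiv.swap o q) o o o o p p q q
    simp only [Equiv.swap_apply_left, Equiv.swap_apply_right, sw hop.symm hpq] at h
    rw [← h, T2_comm p p o o, mul_comm (T2 o o p p)]
  rw [T2_comm q q o o, g1, g2] at h18
  have hc : ((d₁ * d₂ : ℕ) : ℂ) = (d₁ : ℂ) * (d₂ : ℂ) := Nat.cast_mul _ _
  have ne : ∀ m : ℕ, m < 4 → ((d₁ * d₂ : ℕ) : ℂ) - m ≠ 0 := fun m hm =>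
    sub_ne_zero.mpr (Nat.cast_injective.ne (by omega))
  have pos : ∀ m : ℕ, ((d₁ * d₂ : ℕ) : ℂ) + m ≠ 0 := fun m => by
    rw [← Nat.cast_add]
    exact Nat.cast_ne_zero.mpr (by omega)
  refine solve_system hc (by simpa using pos 0) (by simpa using ne 1 (by norm_num))
    (by simpa using ne 2 (by norm_num)) (by simpa using ne 3 (by norm_num))
    (by simpa using pos 1) (by simpa using pos 2) (by simpa using pos 3)
    (A := expect μ (T2 o o o o)) (e := expect μ (T2 o o p p)) (S := expect μ (T2 o p p o))
    (T := expect μ (T3 o o o o o o)) (Q₁ := expect μ (T3 o p o o p o))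
    (Q₂ := expect μ (T3 o o o p p o)) (Z := expect μ (T3 o o o o p p))
    (B := expect μ (T2 o o o o * T2 o o o o)) (Y := expect μ (T2 o o o p * T2 o o p o))
    (Y₂ := expect μ (T2 o o o o * T2 o p p o)) (K := expect μ (T2 o o o o * T2 o o p p))
    (C := expect μ (T2 o o p p * T2 o o p p)) (X := expect μ (T2 o o p q * T2 o o q p))
    (G := expect μ (T2 o o p p * T2 o o q q)) (D := expect μ (T2 o o o o * T2 p p p p))
    (X₂ := expect μ (T2 o o o o * T2 p q q p)) (H := expect μ (T2 o o o o * T2 p p q q))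
    ?_ ?_ ?_ ?_ ?_ ?_ ?_ ?_ ?_ ?_ ?_ ?_ ?_ ?_ ?_ ?_ ?_ ?_
  · linear_combination h1
  · linear_combination -h2
  · linear_combination -h3
  · linear_combination h4
  · linear_combination -h5
  · linear_combination -h6
  · linear_combination -h7
  · linear_combination h8
  · linear_combination -h9
  · linear_combination -h10
  · linear_combination -h11
  · linear_combination h12
  · linear_combination -h13
  · linear_combination -h14
  · linear_combination h15
  · linear_combination -h16
  · linear_combination -h17
  · linear_combination -h18

end Relations

/-- `E[Tr(ρ₀ρ₁) · Tr(ρ₂ρ₃)]` for a Haar-random unitary of size `d₁d₂ ≥ 4`. -/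
theorem stmt8 (d₁ d₂ : ℕ) (hd₁ : 0 < d₁) (hd₂ : 0 < d₂) (hd : 4 ≤ d₁ * d₂)
    (μ : Measure (Matrix.unitaryGroup (Fin (d₁ * d₂)) ℂ))
    [μ.IsHaarMeasure] [IsProbabilityMeasure μ] :
    let i0 : Fin (d₁ * d₂) := ⟨0, by omega⟩
    let i1 : Fin (d₁ * d₂) := ⟨1, by omega⟩
    let i2 : Fin (d₁ * d₂) := ⟨2, by omega⟩
    let i3 : Fin (d₁ * d₂) := ⟨3, by omega⟩
    ∫ U, Matrix.trace (rho U i0 * rho U i1) * Matrix.trace (rho U i2 * rho U i3) ∂μ =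
      (((d₂ : ℂ) ^ 2 - 1) * ((d₂ : ℂ) ^ 2 * ((d₂ : ℂ) ^ 2 - 1) * (d₁ : ℂ) ^ 4 + 2 * (7 - 6 * (d₂ : ℂ) ^ 2) * (d₁ : ℂ) ^ 2 + 22)) / ((d₁ : ℂ) ^ 2 * (d₂ : ℂ) ^ 2 * ((d₁ : ℂ) ^ 2 * (d₂ : ℂ) ^ 2 - 7) ^ 2 - 36) := by
  intro i0 i1 i2 i3
  have ne : ∀ {a b : ℕ} (ha : a < d₁ * d₂) (hb : b < d₁ * d₂), a ≠ b →
      (⟨a, ha⟩ : Fin (d₁ * d₂)) ≠ ⟨b, hb⟩ := fun _ _ h h' => h (Fin.mk.inj h')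
  exact expect_four_columns μ hd (ne _ _ (by norm_num)) (ne _ _ (by norm_num))
    (ne _ _ (by norm_num)) (ne _ _ (by norm_num)) (ne _ _ (by norm_num)) (ne _ _ (by norm_num))
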